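/- For every real number c with 0 ≤ c < √6 − √3 there exists a natural number R_c such that for every integer r ≥ R_c and every subset W ⊆ V(G_r) with |W| ≤ 3r² (i.e. |W| ≤ |V(G_r)|/2), one has |ℬ_{G_r}(W)| ≥ c · √(|W| + c²/4) − c²/2. -/

import Mathlib

/-- Adjacency of the infinite hexagonal grid `G∞` in brick-wall coordinates on `ℤ × ℤ`:
`(x,y)` and `(x',y')` are adjacent iff `y' = y` and `|x' - x| = 1`, or
`x' = x` and `|y' - y| = 1` and `x + min y y'` is even. -/
def hexAdj (v w : ℤ × ℤ) : Prop :=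
  (v.2 = w.2 ∧ (v.1 - w.1).natAbs = 1) ∨
  (v.1 = w.1 ∧ (v.2 - w.2).natAbs = 1 ∧ Even (v.1 + min v.2 w.2))

/-- The neighborhood `𝒩(W)`: vertices not in `W` adjacent to some vertex of `W`. -/
def hexNbhd (W : Set (ℤ × ℤ)) : Set (ℤ × ℤ) :=
  {v | v ∉ W ∧ ∃ w ∈ W, hexAdj v w}

/-- The boundary `ℬ(W)`: vertices of `W` adjacent to some vertex not in `W`. -/
def hexBdry (W : Set (ℤ × ℤ)) : Set (ℤ × ℤ) :=
  {v | v ∈ W ∧ ∃ w, w ∉ W ∧ hexAdj v w}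

/-- The outgoing edges `ℰ(W)`, encoded as ordered pairs `(v, w)` with `v ∈ W`, `w ∉ W`
and `v` adjacent to `w`; each edge with exactly one endpoint in `W` corresponds to
exactly one such pair. -/
def hexCutEdges (W : Set (ℤ × ℤ)) : Set ((ℤ × ℤ) × (ℤ × ℤ)) :=
  {p | p.1 ∈ W ∧ p.2 ∉ W ∧ hexAdj p.1 p.2}

/-- The hexagonal cell `C(a,b)`, with vertex set `{(2a+b+i, b+j) : i ∈ {0,1,2}, j ∈ {0,1}}`. -/
def hexCell (a b : ℤ) : Set (ℤ × ℤ) :=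
  {(2*a+b, b), (2*a+b+1, b), (2*a+b+2, b),
   (2*a+b, b+1), (2*a+b+1, b+1), (2*a+b+2, b+1)}

/-- The vertex set `V(G_r)` of the finite hexagonal grid of radius `r`: the union of the
cells `C(a,b)` with `(|a| + |b| + |a+b|)/2 ≤ r - 1`. -/
def gridVerts (r : ℕ) : Set (ℤ × ℤ) :=
  {v | ∃ a b : ℤ, a.natAbs + b.natAbs + (a+b).natAbs ≤ 2*(r-1) ∧ v ∈ hexCell a b}

/-- `𝒩_{G_r}(W)`: vertices of `V(G_r) \ W` adjacent to some vertex of `W`. -/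
def hexNbhdIn (r : ℕ) (W : Set (ℤ × ℤ)) : Set (ℤ × ℤ) :=
  {v | v ∈ gridVerts r ∧ v ∉ W ∧ ∃ w ∈ W, hexAdj v w}

/-- `ℬ_{G_r}(W)`: vertices of `W` adjacent to some vertex of `V(G_r) \ W`. -/
def hexBdryIn (r : ℕ) (W : Set (ℤ × ℤ)) : Set (ℤ × ℤ) :=
  {v | v ∈ W ∧ ∃ w, w ∈ gridVerts r ∧ w ∉ W ∧ hexAdj v w}

/-- `ℰ_{G_r}(W)`: the edges of `G_r` with exactly one endpoint in `W ⊆ V(G_r)`, encoded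
as ordered pairs `(v, w)` with `v ∈ W`, `w ∈ V(G_r) \ W`, `v` adjacent to `w`. -/
def hexCutEdgesIn (r : ℕ) (W : Set (ℤ × ℤ)) : Set ((ℤ × ℤ) × (ℤ × ℤ)) :=
  {p | p.1 ∈ W ∧ p.2 ∈ gridVerts r ∧ p.2 ∉ W ∧ hexAdj p.1 p.2}

/-- The index `ind_i(x,y)` of the direction-`i` row containing `(x,y)`
(directions numbered `0, 1, 2` for the paper's `1, 2, 3`):
`ind_1 = y`, `ind_2 = ⌊(y-x)/2⌋`, `ind_3 = ⌊(x+y)/2⌋`. -/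
def rowInd : Fin 3 → ℤ × ℤ → ℤ
  | 0, v => v.2
  | 1, v => Int.fdiv (v.2 - v.1) 2
  | 2, v => Int.fdiv (v.1 + v.2) 2

/-- The linear parameter `p_i` along direction-`i` rows:
`p_1 = x`, `p_2 = x + y`, `p_3 = x - y`. -/
def rowParam : Fin 3 → ℤ × ℤ → ℤ
  | 0, v => v.1
  | 1, v => v.1 + v.2
  | 2, v => v.1 - v.2

/-- A set of integers is consecutive if it contains every integer between any two of
its elements. -/
def ConsecutiveSet (S : Set ℤ) : Prop :=
  ∀ a ∈ S, ∀ b ∈ S, ∀ k : ℤ, a ≤ k → k ≤ b → k ∈ S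

/-- `v` is an outermost neighbor of `W` for direction `i`: the direction-`i` row of `v`
is gray, and the parameter of `v` is `m - 1` or `M + 1`, where `m` and `M` are the
minimum and maximum of the parameter over `W` intersected with that row. -/
def IsOutermostNeighbor (W : Set (ℤ × ℤ)) (i : Fin 3) (v : ℤ × ℤ) : Prop :=
  (rowParam i v + 1 ∈ rowParam i '' {w ∈ W | rowInd i w = rowInd i v} ∧
    ∀ q ∈ rowParam i '' {w ∈ W | rowInd i w = rowInd i v}, rowParam i v + 1 ≤ q) ∨
  (rowParam i v - 1 ∈ rowParam i '' {w ∈ W | rowInd i w = rowInd i v} ∧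
    ∀ q ∈ rowParam i '' {w ∈ W | rowInd i w = rowInd i v}, q ≤ rowParam i v - 1)

/-!
In symmetric coordinates `V(G_r)` is the set of integer triples with entries in `[1 - r, r]` and sum
`1` or `2`, and the `2r` rows of each of the three directions are the level sets of a coordinate.
A row is a path, so a mixed row, one meeting both `W` and its complement, contains a vertex of
`ℬ(W)`. Hence at most `b = |ℬ(W)|` rows of each direction are mixed, and each of the remaining
rows is full for `W` or for its complement `W'`. A full row of `W` and a full row of `W'` in
different directions cannot cross. If `4b ≥ 5r`, then `25|W| ≤ 75r² ≤ 48b²`, so let `4b < 5r`.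

* If `W` or `W'` has full rows in at most one direction, then in the other directions it meets at
  most `b` rows, and counting triples by their coordinates bounds its size by `(3b² + 1) / 2`.
* Otherwise some central row `t`, with `1 - (2r - b) ≤ t ≤ 2r - b`, is full for `W`, say. After a
  point reflection `t ≥ 1`, and then all full rows of `W` and `W'` are positive. At most `2(b - r)`
  of the positive rows of each direction are not full for `W`, and every triple of `W'` has a
  positive coordinate on such a row, so `|W'| ≤ 12r(b - r)`.

The threshold `4b = 5r` is where `12r(b - r) = 3r²`. As `|W| ≤ 3r² ≤ |W'|`, comparison yields
`25|W| ≤ 48b² + 25b` in all cases, so `c²(|W| - b) ≤ b²` whenever `c² ≤ 25/48`, which is the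
claimed inequality after squaring. Finally `(√6 - √3)² < 25/48`.
-/

open Finset

/-! ### Triples of sum one or two -/

section Triples

variable {i j k : Fin 3}

lemma exists_third (i j : Fin 3) : ∃ k, i ≠ k ∧ j ≠ k := by
  revert i j; decide

lemma univ_eq_of_ne (hij : i ≠ j) (hik : i ≠ k) (hjk : j ≠ k) : univ = {i, j, k} := by
  revert i j k; decide

lemma sum_univ_eq_of_ne {M : Type*} [AddCommMonoid M] (hij : i ≠ j) (hik : i ≠ k) (hjk : j ≠ k)
    (c : Fin 3 → M) : ∑ l, c l = c i + (c j + c k) := by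
  rw [univ_eq_of_ne hij hik hjk, sum_insert (by simp [hij, hik]), sum_pair hjk]

lemma forall_iff_of_ne (hij : i ≠ j) (hik : i ≠ k) (hjk : j ≠ k) {p : Fin 3 → Prop} :
    (∀ l, p l) ↔ p i ∧ p j ∧ p k := by
  have h : (∀ l ∈ univ, p l) ↔ p i ∧ p j ∧ p k := by
    rw [univ_eq_of_ne hij hik hjk]; simp
  simpa using h

/-- A triple is determined by its coordinates in two directions and its sum, and these are
arbitrary. -/
def pairSumEquiv (hij : i ≠ j) : (Fin 3 → ℤ) ≃ ℤ × ℤ × ℤ where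
  toFun c := (c i, c j, ∑ l, c l)
  invFun p l := if l = i then p.1 else if l = j then p.2.1 else p.2.2 - p.1 - p.2.1
  left_inv c := by
    obtain ⟨k, hik, hjk⟩ := exists_third i j
    funext l
    have hsum := sum_univ_eq_of_ne hij hik hjk c
    revert l
    rw [forall_iff_of_ne hij hik hjk]
    simp only [if_true, if_neg hij.symm, if_neg hik.symm, if_neg hjk.symm, true_and]
    omega
  right_inv p := by
    obtain ⟨k, hik, hjk⟩ := exists_third i j
    simp [sum_univ_eq_of_ne hij hik hjk, hij.symm, hik.symm, hjk.symm]

lemma exists_eq_eq_sum_eq (hij : i ≠ j) (a b e : ℤ) :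
    ∃ c : Fin 3 → ℤ, c i = a ∧ c j = b ∧ ∑ l, c l = e := by
  simpa [pairSumEquiv] using (pairSumEquiv hij).surjective (a, b, e)

/-- The vertices of `G_r` in symmetric coordinates (see `hexCoords`). -/
noncomputable def hexTriples (r : ℕ) : Finset (Fin 3 → ℤ) :=
  {c ∈ Fintype.piFinset fun _ ↦ Icc (1 - (r : ℤ)) r | ∑ l, c l = 1 ∨ ∑ l, c l = 2}

lemma mem_hexTriples {r : ℕ} {c : Fin 3 → ℤ} :
    c ∈ hexTriples r ↔
      (∀ l, 1 - (r : ℤ) ≤ c l ∧ c l ≤ r) ∧ (∑ l, c l = 1 ∨ ∑ l, c l = 2) := by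
  simp [hexTriples]

lemma exists_mem_hexTriples_of_crossing {r : ℕ} (hij : i ≠ j) {s t : ℤ}
    (hs : s ∈ Icc (1 - (r : ℤ)) r) (ht : t ∈ Icc (1 - (r : ℤ)) r) (hlo : -r < s + t)
    (hhi : s + t < r + 2) : ∃ c ∈ hexTriples r, c i = s ∧ c j = t := by
  rw [mem_Icc] at hs ht
  obtain ⟨k, hik, hjk⟩ := exists_third i j
  obtain ⟨e, he, hlo', hhi'⟩ : ∃ e : ℤ, (e = 1 ∨ e = 2) ∧ 1 - (r : ℤ) ≤ e - s - t ∧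
      e - s - t ≤ r := by
    rcases le_or_gt (s + t) r with h | h
    · exact ⟨1, by omega⟩
    · exact ⟨2, by omega⟩
  obtain ⟨c, hci, hcj, hce⟩ := exists_eq_eq_sum_eq hij s t e
  have hsum := sum_univ_eq_of_ne hij hik hjk c
  refine ⟨c, mem_hexTriples.2 ⟨(forall_iff_of_ne hij hik hjk).2 ?_, hce ▸ he⟩, hci, hcj⟩
  omega

/-- The triples of sum `1` or `2` whose coordinates in two given directions lie in `A` and `B`:
a rhombus if `A` and `B` are intervals. -/
def hexRhombus (hij : i ≠ j) (A B : Finset ℤ) : Finset (Fin 3 → ℤ) :=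
  (A ×ˢ B ×ˢ {1, 2}).map (pairSumEquiv hij).symm.toEmbedding

lemma mem_hexRhombus {hij : i ≠ j} {A B : Finset ℤ} {c : Fin 3 → ℤ} :
    c ∈ hexRhombus hij A B ↔ c i ∈ A ∧ c j ∈ B ∧ (∑ l, c l = 1 ∨ ∑ l, c l = 2) := by
  simp [hexRhombus, pairSumEquiv, mem_map_equiv]

lemma card_hexRhombus (hij : i ≠ j) (A B : Finset ℤ) :
    #(hexRhombus hij A B) = 2 * (#A * #B) := by
  rw [hexRhombus, card_map, card_product, card_product, card_pair (by norm_num)]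
  ring

lemma hexRhombus_subset_hexRhombus {hij : i ≠ j} {A B A' B' : Finset ℤ} (hA : A ⊆ A')
    (hB : B ⊆ B') : hexRhombus hij A B ⊆ hexRhombus hij A' B' :=
  map_subset_map.2 (product_subset_product hA (product_subset_product_left hB))

lemma ne_add_two (i : Fin 3) : i ≠ i + 2 := by
  revert i; decide

lemma exists_pos_nonpos {c : Fin 3 → ℤ} (hc : ∑ l, c l = 1 ∨ ∑ l, c l = 2) :
    ∃ l, 1 ≤ c l ∧ c (l + 2) ≤ 0 := by
  rw [Fin.sum_univ_three] at hc
  have h₁ : (1 : Fin 3) + 2 = 0 := rfl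
  have h₂ : (2 : Fin 3) + 2 = 1 := rfl
  by_contra! h
  have h0 := h 0
  have h1 := h 1
  have h2 := h 2
  rw [h₁] at h1
  rw [h₂] at h2
  rw [zero_add] at h0
  omega

lemma hexTriples_eq_biUnion (r : ℕ) :
    hexTriples r = univ.biUnion fun l ↦
      hexRhombus (ne_add_two l) (Icc 1 (r : ℤ)) (Icc (1 - (r : ℤ)) 0) := by
  ext c
  simp only [mem_biUnion, mem_univ, true_and, mem_hexRhombus, mem_Icc]
  constructor
  · intro hc
    rw [mem_hexTriples] at hc
    obtain ⟨l, h₁, h₂⟩ := exists_pos_nonpos hc.2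
    exact ⟨l, ⟨h₁, (hc.1 l).2⟩, ⟨(hc.1 _).1, h₂⟩, hc.2⟩
  · rintro ⟨l, h₁, h₂, hsum⟩
    obtain ⟨k, hlk, hk⟩ := exists_third l (l + 2)
    have := sum_univ_eq_of_ne (ne_add_two l) hlk hk c
    refine mem_hexTriples.2 ⟨(forall_iff_of_ne (ne_add_two l) hlk hk).2 ?_, hsum⟩
    omega

lemma card_hexTriples (r : ℕ) : #(hexTriples r) = 6 * r ^ 2 := by
  rw [hexTriples_eq_biUnion, card_biUnion]
  · simp only [card_hexRhombus, Int.card_Icc, sum_const, card_univ, Fintype.card_fin,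
      add_sub_cancel_right, Int.toNat_natCast, zero_add, sub_sub_cancel, smul_eq_mul]
    ring
  · intro l _ m _ hlm
    refine disjoint_left.2 fun c hl hm ↦ ?_
    simp only [mem_hexRhombus, mem_Icc] at hl hm
    rcases (by decide : ∀ l m : Fin 3, l ≠ m → l = m + 2 ∨ m = l + 2) l m hlm with h | h
    · rw [← h] at hm; omega
    · rw [← h] at hl; omega

/-- A point reflection of the rhombus exchanges its parts inside and outside `hexTriples r`. -/
lemma sq_le_card_hexRhombus_sdiff (hij : i ≠ j) (r : ℕ) :
    r ^ 2 ≤ #(hexRhombus hij (Icc 1 (r : ℤ)) (Icc 1 (r : ℤ)) \ hexTriples r) := by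
  set Q := hexRhombus hij (Icc 1 (r : ℤ)) (Icc 1 (r : ℤ)) with hQ
  obtain ⟨k, hik, hjk⟩ := exists_third i j
  obtain ⟨d, hdi, hdj, hdsum⟩ := exists_eq_eq_sum_eq hij ((r : ℤ) + 1) (r + 1) 3
  have hinj : #(Q ∩ hexTriples r) ≤ #(Q \ hexTriples r) := by
    refine card_le_card_of_injOn (d - ·) (fun c hc ↦ ?_) sub_right_injective.injOn
    simp only [hQ, coe_inter, Set.mem_inter_iff, mem_coe, mem_hexRhombus, mem_hexTriples,
      mem_sdiff, mem_Icc, forall_iff_of_ne hij hik hjk, Pi.sub_apply, sum_sub_distrib] at hc ⊢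
    have hc' := sum_univ_eq_of_ne hij hik hjk c
    have hd' := sum_univ_eq_of_ne hij hik hjk d
    omega
  have hcard := card_inter_add_card_sdiff Q (hexTriples r)
  have hcardQ : #Q = 2 * r ^ 2 := by rw [hQ, card_hexRhombus]; simp [sq]
  omega

end Triples

/-! ### Counting in sumsets -/

section HookCounting

variable {α : Type*} [AddCommMonoid α] [LinearOrder α] [IsOrderedCancelAddMonoid α]

/-- The pairs deleted on the right-hand side form a hook, along which the sum is strictly
monotone. -/
lemma card_filter_add_mem_le_erase {I J : Finset α} (K : Finset α) (hI : I.Nonempty)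
    (hJ : J.Nonempty) :
    #{p ∈ I ×ˢ J | p.1 + p.2 ∈ K} ≤
      #{p ∈ I.erase (I.max' hI) ×ˢ J.erase (J.min' hJ) | p.1 + p.2 ∈ K} + #K := by
  set a := I.max' hI
  set b := J.min' hJ
  set hook : Finset (α × α) := {p ∈ I ×ˢ J | p.1 + p.2 ∈ K ∧ (p.1 = a ∨ p.2 = b)} with hhook
  have hsub : {p ∈ I ×ˢ J | p.1 + p.2 ∈ K} ⊆
      {p ∈ I.erase a ×ˢ J.erase b | p.1 + p.2 ∈ K} ∪ hook := by
    intro p hp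
    simp only [hhook, mem_union, mem_filter, mem_product, mem_erase] at hp ⊢
    tauto
  have hle : ∀ p ∈ hook, p.1 ≤ a ∧ b ≤ p.2 := by
    intro p hp
    rw [hhook, mem_filter, mem_product] at hp
    exact ⟨I.le_max' _ hp.1.1, J.min'_le _ hp.1.2⟩
  have hcard : #hook ≤ #K := by
    refine card_le_card_of_injOn (fun p ↦ p.1 + p.2) (fun p hp ↦ ?_) fun p hp q hq hpq ↦ ?_
    · exact (mem_filter.1 hp).2.1
    · have hpab := hle p hp
      have hqab := hle q hq
      rcases (mem_filter.1 hp).2.2 with hp' | hp' <;> rcases (mem_filter.1 hq).2.2 with hq' | hq'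
      · exact Prod.ext (hp'.trans hq'.symm) (by simpa [hp', hq'] using hpq)
      · obtain ⟨h₁, h₂⟩ :=
          (add_eq_add_iff_eq_and_eq (hqab.1.trans_eq hp'.symm) (hq'.trans_le hpab.2)).1 hpq.symm
        exact Prod.ext h₁.symm h₂.symm
      · obtain ⟨h₁, h₂⟩ :=
          (add_eq_add_iff_eq_and_eq (hpab.1.trans_eq hq'.symm) (hp'.trans_le hqab.2)).1 hpq
        exact Prod.ext h₁ h₂
      · exact Prod.ext (by simpa [hp', hq'] using hpq) (hp'.trans hq'.symm)
  calc #{p ∈ I ×ˢ J | p.1 + p.2 ∈ K}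
      ≤ #{p ∈ I.erase a ×ˢ J.erase b | p.1 + p.2 ∈ K} + #hook :=
        (card_le_card hsub).trans (card_union_le _ _)
    _ ≤ _ := Nat.add_le_add_left hcard _

lemma four_mul_card_filter_add_mem_add_sq_le {I J K : Finset α} {a k : ℕ} (hI : #I ≤ a)
    (hJ : #J ≤ a) (hK : #K ≤ k) (hka : k ≤ 2 * a + 1) :
    4 * #{p ∈ I ×ˢ J | p.1 + p.2 ∈ K} + k ^ 2 ≤ 4 * a * k + 1 := by
  induction a generalizing I J with
  | zero =>
    obtain rfl : I = ∅ := card_eq_zero.1 (Nat.le_zero.1 hI)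
    have hk : k * k ≤ 1 * 1 := Nat.mul_le_mul hka hka
    simpa [sq] using hk
  | succ a ih =>
    have htriv : #{p ∈ I ×ˢ J | p.1 + p.2 ∈ K} ≤ (a + 1) * (a + 1) :=
      (card_filter_le _ _).trans ((card_product _ _).trans_le (Nat.mul_le_mul hI hJ))
    rcases le_or_gt k (2 * a + 1) with hk | hk
    · rcases I.eq_empty_or_nonempty with rfl | hIne
      · simp only [empty_product, filter_empty, card_empty]
        nlinarith
      rcases J.eq_empty_or_nonempty with rfl | hJne
      · simp only [product_empty, filter_empty, card_empty]
        nlinarith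
      have hhook := card_filter_add_mem_le_erase K hIne hJne
      have hrest := ih (I := I.erase (I.max' hIne)) (J := J.erase (J.min' hJne))
        (by rw [card_erase_of_mem (I.max'_mem hIne)]; omega)
        (by rw [card_erase_of_mem (J.min'_mem hJne)]; omega) hk
      nlinarith
    · obtain rfl | rfl : k = 2 * (a + 1) ∨ k = 2 * (a + 1) + 1 := by omega
      all_goals nlinarith

end HookCounting

/-! ### Rows of a set of triples -/

section Rows

variable {r b : ℕ} {S : Finset (Fin 3 → ℤ)} {i j : Fin 3} {t u : ℤ}

/-- The rows of direction `i` that meet `S`. -/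
def metRows (S : Finset (Fin 3 → ℤ)) (i : Fin 3) : Finset ℤ := S.image (· i)

/-- The rows of direction `i` that meet both `S` and its complement. -/
noncomputable def mixedRows (r : ℕ) (S : Finset (Fin 3 → ℤ)) (i : Fin 3) : Finset ℤ :=
  metRows S i ∩ metRows (hexTriples r \ S) i

/-- The rows of direction `i` contained in `S`. -/
noncomputable def fullRows (r : ℕ) (S : Finset (Fin 3 → ℤ)) (i : Fin 3) : Finset ℤ :=
  Icc (1 - (r : ℤ)) r \ metRows (hexTriples r \ S) i

lemma mem_metRows : t ∈ metRows S i ↔ ∃ c ∈ S, c i = t := mem_image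

lemma apply_mem_metRows {c : Fin 3 → ℤ} (hc : c ∈ S) (i : Fin 3) : c i ∈ metRows S i :=
  mem_image_of_mem _ hc

lemma mem_fullRows :
    t ∈ fullRows r S i ↔
      t ∈ Icc (1 - (r : ℤ)) r ∧ ∀ c ∈ hexTriples r, c i = t → c ∈ S := by
  simp only [fullRows, mem_sdiff, mem_metRows]
  refine and_congr_right fun _ ↦ ⟨fun h c hc hct ↦ ?_, fun h ⟨c, hc, hct⟩ ↦ hc.2 (h c hc.1 hct)⟩
  by_contra hcS
  exact h ⟨c, ⟨hc, hcS⟩, hct⟩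

lemma mixedRows_sdiff (hS : S ⊆ hexTriples r) (i : Fin 3) :
    mixedRows r (hexTriples r \ S) i = mixedRows r S i := by
  rw [mixedRows, mixedRows, Finset.sdiff_sdiff_eq_self hS, inter_comm]

lemma metRows_subset_Icc (hS : S ⊆ hexTriples r) (i : Fin 3) :
    metRows S i ⊆ Icc (1 - (r : ℤ)) r :=
  image_subset_iff.2 fun _ hc ↦ mem_Icc.2 ((mem_hexTriples.1 (hS hc)).1 i)

lemma two_mul_le_card_mixedRows_add (hS : S ⊆ hexTriples r) (i : Fin 3) :
    2 * r ≤ #(mixedRows r S i) +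
      #(fullRows r S i ∪ fullRows r (hexTriples r \ S) i) := by
  have hunion : fullRows r S i ∪ fullRows r (hexTriples r \ S) i =
      Icc (1 - (r : ℤ)) r \ mixedRows r S i := by
    rw [fullRows, fullRows, Finset.sdiff_sdiff_eq_self hS, mixedRows, sdiff_inter_distrib_right,
      union_comm]
  have hcard := le_card_sdiff (mixedRows r S i) (Icc (1 - (r : ℤ)) r)
  rw [Int.card_Icc] at hcard
  rw [hunion]
  omega

lemma card_metRows_le_of_fullRows_eq_empty (hS : S ⊆ hexTriples r) (h : fullRows r S i = ∅) :
    #(metRows S i) ≤ #(mixedRows r S i) :=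
  card_le_card <| subset_inter Subset.rfl <|
    (metRows_subset_Icc hS i).trans (sdiff_eq_empty_iff_subset.1 h)

lemma subset_hexRhombus (hS : S ⊆ hexTriples r) (hij : i ≠ j) :
    S ⊆ hexRhombus hij (metRows S i) (metRows S j) := fun _ hc ↦
  mem_hexRhombus.2
    ⟨apply_mem_metRows hc i, apply_mem_metRows hc j, (mem_hexTriples.1 (hS hc)).2⟩

lemma card_add_sq_le_of_Icc_subset (hS : S ⊆ hexTriples r) (hij : i ≠ j)
    (hi : Icc 1 (r : ℤ) ⊆ metRows S i) (hj : Icc 1 (r : ℤ) ⊆ metRows S j) :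
    #S + r ^ 2 ≤ 2 * (#(metRows S i) * #(metRows S j)) := by
  set Q := hexRhombus hij (Icc 1 (r : ℤ)) (Icc 1 (r : ℤ))
  have hdisj : Disjoint S (Q \ hexTriples r) := disjoint_sdiff.mono_left hS
  calc #S + r ^ 2
      ≤ #S + #(Q \ hexTriples r) := Nat.add_le_add_left (sq_le_card_hexRhombus_sdiff hij r) _
    _ = #(S ∪ Q \ hexTriples r) := (card_union_of_disjoint hdisj).symm
    _ ≤ #(hexRhombus hij (metRows S i) (metRows S j)) :=
        card_le_card <| union_subset (subset_hexRhombus hS hij) <|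
          sdiff_subset.trans (hexRhombus_subset_hexRhombus hi hj)
    _ = _ := card_hexRhombus hij _ _

lemma four_mul_card_filter_sum_eq_le (hb : ∀ i, #(metRows S i) ≤ b) (e : ℤ) :
    4 * #{c ∈ S | ∑ l, c l = e} ≤ 3 * b ^ 2 + 1 := by
  set K : Finset ℤ := (metRows S 2).image (e - ·)
  have hle : #{c ∈ S | ∑ l, c l = e} ≤
      #{p ∈ metRows S 0 ×ˢ metRows S 1 | p.1 + p.2 ∈ K} := by
    refine card_le_card_of_injOn (fun c ↦ (c 0, c 1)) (fun c hc ↦ ?_) fun c hc d hd hcd ↦ ?_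
    · obtain ⟨hcS, rfl⟩ := mem_filter.1 hc
      exact mem_filter.2 ⟨mem_product.2 ⟨apply_mem_metRows hcS 0, apply_mem_metRows hcS 1⟩,
        mem_image.2 ⟨c 2, apply_mem_metRows hcS 2, by rw [Fin.sum_univ_three]; ring⟩⟩
    · have hsum : ∑ l, c l = ∑ l, d l := (mem_filter.1 hc).2.trans (mem_filter.1 hd).2.symm
      exact (pairSumEquiv (zero_ne_one : (0 : Fin 3) ≠ 1)).injective
        (by simp_all [pairSumEquiv])
  have := four_mul_card_filter_add_mem_add_sq_le (hb 0) (hb 1) (card_image_le.trans (hb 2))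
    (by omega : b ≤ 2 * b + 1) (K := K)
  nlinarith

lemma two_mul_card_le_of_card_metRows_le (hS : S ⊆ hexTriples r)
    (hb : ∀ i, #(metRows S i) ≤ b) : 2 * #S ≤ 3 * b ^ 2 + 1 := by
  have hunion : S ⊆ {c ∈ S | ∑ l, c l = 1} ∪ {c ∈ S | ∑ l, c l = 2} := fun c hc ↦ by
    simpa [hc] using (mem_hexTriples.1 (hS hc)).2
  have hcard := (card_le_card hunion).trans (card_union_le _ _)
  have h₁ := four_mul_card_filter_sum_eq_le hb 1
  have h₂ := four_mul_card_filter_sum_eq_le hb 2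
  omega

lemma add_two_le_or_add_le_of_mem_fullRows (hij : i ≠ j) (ht : t ∈ fullRows r S i)
    (hu : u ∈ fullRows r (hexTriples r \ S) j) : (r : ℤ) + 2 ≤ t + u ∨ t + u ≤ -r := by
  rw [mem_fullRows] at ht hu
  by_contra! h
  obtain ⟨c, hc, hci, hcj⟩ := exists_mem_hexTriples_of_crossing hij ht.1 hu.1 h.2 h.1
  exact (mem_sdiff.1 (hu.2 c hc hcj)).2 (ht.2 c hc hci)

lemma mem_metRows_of_mem_fullRows (hij : i ≠ j) (ht : t ∈ fullRows r S i)
    (hu : u ∈ Icc (1 - (r : ℤ)) r) (hlo : -r < t + u) (hhi : t + u < r + 2) :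
    u ∈ metRows S j := by
  rw [mem_fullRows] at ht
  obtain ⟨c, hc, hci, hcj⟩ := exists_mem_hexTriples_of_crossing hij ht.1 hu hlo hhi
  exact mem_metRows.2 ⟨c, ht.2 c hc hci, hcj⟩

end Rows

/-! ### Point reflection -/

section Reflection

variable {r b : ℕ} {S : Finset (Fin 3 → ℤ)} {i : Fin 3} {t : ℤ}

/-- The image of `S` under the point reflection `c ↦ 1 - c`, which preserves `hexTriples r` and
exchanges its nonpositive and its positive rows. -/
def reflection (S : Finset (Fin 3 → ℤ)) : Finset (Fin 3 → ℤ) :=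
  S.map (Equiv.subLeft 1).toEmbedding

lemma card_reflection (S : Finset (Fin 3 → ℤ)) : #(reflection S) = #S := card_map _

lemma reflection_hexTriples (r : ℕ) : reflection (hexTriples r) = hexTriples r := by
  ext c
  simp only [reflection, mem_map_equiv, Equiv.subLeft_symm_apply, mem_hexTriples,
    Fin.sum_univ_three, Pi.add_apply, Pi.neg_apply, Pi.one_apply]
  refine and_congr (forall_congr' fun l ↦ ?_) ?_ <;> omega

lemma reflection_subset (hS : S ⊆ hexTriples r) : reflection S ⊆ hexTriples r :=
  (map_subset_map.2 hS).trans_eq (reflection_hexTriples r)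

lemma hexTriples_sdiff_reflection (r : ℕ) (S : Finset (Fin 3 → ℤ)) :
    hexTriples r \ reflection S = reflection (hexTriples r \ S) := by
  conv_lhs => rw [← reflection_hexTriples r]
  exact (Finset.map_sdiff _ _).symm

lemma metRows_reflection (S : Finset (Fin 3 → ℤ)) (i : Fin 3) :
    metRows (reflection S) i = (metRows S i).image (1 - ·) := by
  simp only [metRows, reflection, map_eq_image, image_image]
  rfl

lemma card_mixedRows_reflection (r : ℕ) (S : Finset (Fin 3 → ℤ)) (i : Fin 3) :
    #(mixedRows r (reflection S) i) = #(mixedRows r S i) := by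
  rw [mixedRows, hexTriples_sdiff_reflection, metRows_reflection, metRows_reflection,
    ← image_inter _ _ sub_right_injective, card_image_of_injective _ sub_right_injective,
    mixedRows]

lemma fullRows_reflection (r : ℕ) (S : Finset (Fin 3 → ℤ)) (i : Fin 3) :
    fullRows r (reflection S) i = (fullRows r S i).image (1 - ·) := by
  have hIcc : (Icc (1 - (r : ℤ)) r).image (1 - ·) = Icc (1 - (r : ℤ)) r := by
    ext a
    simp only [mem_image, mem_Icc]
    constructor
    · rintro ⟨x, hx, rfl⟩
      omega
    · exact fun ha ↦ ⟨1 - a, by omega, by omega⟩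
  rw [fullRows, hexTriples_sdiff_reflection, metRows_reflection, fullRows,
    image_sdiff _ _ sub_right_injective, hIcc]

end Reflection

/-! ### The isoperimetric inequality for triples -/

section Isoperimetry

variable {r b : ℕ} {S : Finset (Fin 3 → ℤ)} {i j i₀ : Fin 3} {t u : ℤ}

lemma card_add_sq_le_of_mem_fullRows (hS : S ⊆ hexTriples r) (hb : ∀ j, #(mixedRows r S j) ≤ b)
    (h : ∀ j ≠ i, fullRows r S j = ∅) (ht : t ∈ fullRows r S i) :
    #S + r ^ 2 ≤ 2 * b ^ 2 := by
  wlog ht0 : t ≤ 0 generalizing S t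
  · rw [← card_reflection]
    refine this (t := 1 - t) (reflection_subset hS)
      (fun j ↦ (card_mixedRows_reflection r S j).trans_le (hb j)) (fun j hj ↦ ?_) ?_ (by omega)
    · rw [fullRows_reflection, h j hj, image_empty]
    · rw [fullRows_reflection]
      exact mem_image_of_mem _ ht
  obtain ⟨j, hij, -⟩ := exists_third i i
  obtain ⟨k, hik, hjk⟩ := exists_third i j
  have htr := mem_Icc.1 (mem_fullRows.1 ht).1
  have hpos : ∀ l, i ≠ l → Icc 1 (r : ℤ) ⊆ metRows S l := fun l hl u hu ↦ by
    rw [mem_Icc] at hu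
    exact mem_metRows_of_mem_fullRows hl ht (mem_Icc.2 (by omega)) (by omega) (by omega)
  have hle : ∀ l, i ≠ l → #(metRows S l) ≤ b := fun l hl ↦
    (card_metRows_le_of_fullRows_eq_empty hS (h l hl.symm)).trans (hb l)
  calc #S + r ^ 2
      ≤ 2 * (#(metRows S j) * #(metRows S k)) :=
        card_add_sq_le_of_Icc_subset hS hjk (hpos j hij) (hpos k hik)
    _ ≤ 2 * (b * b) := Nat.mul_le_mul_left 2 (Nat.mul_le_mul (hle j hij) (hle k hik))
    _ = 2 * b ^ 2 := by rw [sq]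

lemma two_mul_card_le_of_fullRows_eq_empty (hS : S ⊆ hexTriples r)
    (hb : ∀ j, #(mixedRows r S j) ≤ b) (hbr : 4 * b < 5 * r)
    (h : ∀ j ≠ i, fullRows r S j = ∅) : 2 * #S ≤ 3 * b ^ 2 + 1 := by
  rcases (fullRows r S i).eq_empty_or_nonempty with hi | ⟨t, ht⟩
  · refine two_mul_card_le_of_card_metRows_le hS fun j ↦ ?_
    refine (card_metRows_le_of_fullRows_eq_empty hS ?_).trans (hb j)
    rcases eq_or_ne j i with rfl | hj
    exacts [hi, h j hj]
  · have := card_add_sq_le_of_mem_fullRows hS hb h ht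
    nlinarith

lemma add_two_le_of_mem_fullRows (hij : i ≠ j) (ht : t ∈ fullRows r S i)
    (hu : u ∈ fullRows r (hexTriples r \ S) j) (hpos : 1 ≤ t ∨ 1 ≤ u) : (r : ℤ) + 2 ≤ t + u := by
  have htr := mem_Icc.1 (mem_fullRows.1 ht).1
  have hur := mem_Icc.1 (mem_fullRows.1 hu).1
  have := add_two_le_or_add_le_of_mem_fullRows hij ht hu
  omega

/-- Otherwise the rows `t` and `u` would leave too little room for the full rows of a direction
different from both of theirs. -/
lemma lt_of_mem_fullRows_sdiff (hS : S ⊆ hexTriples r) (hb : ∀ j, #(mixedRows r S j) ≤ b)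
    (ht : t ∈ fullRows r S i₀) (ht1 : 1 ≤ t) (htb : t ≤ 2 * r - b)
    (hu : u ∈ fullRows r (hexTriples r \ S) i) (hu1 : 1 ≤ u) : 2 * (r : ℤ) - b < u := by
  obtain ⟨k, hi₀k, hik⟩ := exists_third i₀ i
  have hsub : fullRows r S k ∪ fullRows r (hexTriples r \ S) k ⊆
      Icc ((r : ℤ) + 2 - max t u) r := by
    refine union_subset (fun w hw ↦ ?_) fun w hw ↦ ?_
    · have hwr := mem_Icc.1 (mem_fullRows.1 hw).1
      have := add_two_le_of_mem_fullRows hik.symm hw hu (Or.inr hu1)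
      exact mem_Icc.2 (by omega)
    · have hwr := mem_Icc.1 (mem_fullRows.1 hw).1
      have := add_two_le_of_mem_fullRows hi₀k ht hw (Or.inl ht1)
      exact mem_Icc.2 (by omega)
  have hcard := card_le_card hsub
  have hmixed := two_mul_le_card_mixedRows_add hS k
  have hbk := hb k
  rw [Int.card_Icc] at hcard
  omega

lemma one_le_of_mem_fullRows_sdiff (hS : S ⊆ hexTriples r) (hb : ∀ j, #(mixedRows r S j) ≤ b)
    (hbr : 4 * b < 5 * r) (hSc : ∀ i, ∃ j ≠ i, (fullRows r (hexTriples r \ S) j).Nonempty)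
    (ht : t ∈ fullRows r S i₀) (ht1 : 1 ≤ t) (htb : t ≤ 2 * r - b)
    (hu : u ∈ fullRows r (hexTriples r \ S) i) : 1 ≤ u := by
  have hpos : ∀ j ≠ i₀, ∀ w ∈ fullRows r (hexTriples r \ S) j, 1 ≤ w := fun j hj w hw ↦ by
    have htr := mem_Icc.1 (mem_fullRows.1 ht).1
    have := add_two_le_of_mem_fullRows hj.symm ht hw (Or.inl ht1)
    omega
  rcases ne_or_eq i i₀ with hi | rfl
  · exact hpos i hi u hu
  by_contra! hu0
  obtain ⟨j, hji, w, hw⟩ := hSc i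
  obtain ⟨k, hik, hjk⟩ := exists_third i j
  have hempty : fullRows r S k = ∅ := eq_empty_of_forall_notMem fun s hs ↦ by
    have hwr := mem_Icc.1 (mem_fullRows.1 hw).1
    have hsw := add_two_le_of_mem_fullRows hjk.symm hs hw (Or.inr (hpos j hji w hw))
    have hsu := add_two_le_of_mem_fullRows hik.symm hs hu (Or.inl (by omega))
    have hsr := mem_Icc.1 (mem_fullRows.1 hs).1
    omega
  have hsub : fullRows r (hexTriples r \ S) k ⊆ Icc (2 * (r : ℤ) - b + 1) r := fun s hs ↦ by
    have := lt_of_mem_fullRows_sdiff hS hb ht ht1 htb hs (hpos k hik.symm s hs)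
    have hsr := mem_Icc.1 (mem_fullRows.1 hs).1
    exact mem_Icc.2 (by omega)
  have hcard := card_le_card hsub
  have hmixed := two_mul_le_card_mixedRows_add hS k
  have hbk := hb k
  rw [hempty, empty_union] at hmixed
  rw [Int.card_Icc] at hcard
  omega

lemma card_Icc_sdiff_fullRows_le (hS : S ⊆ hexTriples r) (hb : ∀ j, #(mixedRows r S j) ≤ b)
    (hbr : 4 * b < 5 * r) (hSc : ∀ i, ∃ j ≠ i, (fullRows r (hexTriples r \ S) j).Nonempty)
    (ht : t ∈ fullRows r S i₀) (ht1 : 1 ≤ t) (htb : t ≤ 2 * r - b) (i : Fin 3) :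
    (#(Icc 1 (r : ℤ) \ fullRows r S i) : ℤ) ≤ 2 * (b - r) := by
  have hpos {j u} (hu : u ∈ fullRows r (hexTriples r \ S) j) : 1 ≤ u :=
    one_le_of_mem_fullRows_sdiff hS hb hbr hSc ht ht1 htb hu
  have hfull : fullRows r S i ⊆ Icc 1 (r : ℤ) := fun s hs ↦ by
    obtain ⟨j, hji, u, hu⟩ := hSc i
    have := add_two_le_of_mem_fullRows hji.symm hs hu (Or.inr (hpos hu))
    have hur := mem_Icc.1 (mem_fullRows.1 hu).1
    have hsr := mem_Icc.1 (mem_fullRows.1 hs).1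
    exact mem_Icc.2 (by omega)
  have hfull' : fullRows r (hexTriples r \ S) i ⊆ Icc (2 * (r : ℤ) - b + 1) r := fun u hu ↦
    mem_Icc.2 ⟨lt_of_mem_fullRows_sdiff hS hb ht ht1 htb hu (hpos hu),
      (mem_Icc.1 (mem_fullRows.1 hu).1).2⟩
  have hsdiff := card_sdiff_add_card_eq_card hfull
  have hcard := card_le_card hfull
  have hcard' := card_le_card hfull'
  have hunion := card_union_le (fullRows r S i) (fullRows r (hexTriples r \ S) i)
  have hmixed := two_mul_le_card_mixedRows_add hS i
  have hbi := hb i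
  rw [Int.card_Icc] at hsdiff hcard hcard'
  omega

lemma sdiff_subset_biUnion_hexRhombus (r : ℕ) (S : Finset (Fin 3 → ℤ)) :
    hexTriples r \ S ⊆ univ.biUnion fun i ↦
      hexRhombus (ne_add_two i) (Icc 1 (r : ℤ) \ fullRows r S i) (Icc (1 - (r : ℤ)) 0) := by
  intro c hc
  obtain ⟨hcr, hcS⟩ := mem_sdiff.1 hc
  rw [hexTriples_eq_biUnion] at hcr
  obtain ⟨i, -, hi⟩ := mem_biUnion.1 hcr
  rw [mem_hexRhombus] at hi
  have hnot : c i ∉ fullRows r S i := fun h ↦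
    hcS ((mem_fullRows.1 h).2 c (mem_sdiff.1 hc).1 rfl)
  exact mem_biUnion.2 ⟨i, mem_univ i, mem_hexRhombus.2 ⟨mem_sdiff.2 ⟨hi.1, hnot⟩, hi.2⟩⟩

lemma card_sdiff_le_of_mem_fullRows (hS : S ⊆ hexTriples r) (hb : ∀ j, #(mixedRows r S j) ≤ b)
    (hbr : 4 * b < 5 * r) (hSc : ∀ i, ∃ j ≠ i, (fullRows r (hexTriples r \ S) j).Nonempty)
    (ht : t ∈ fullRows r S i₀) (htlo : 1 - (2 * r - b) ≤ t) (hthi : t ≤ 2 * r - b) :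
    (#(hexTriples r \ S) : ℤ) ≤ 12 * r * (b - r) := by
  wlog ht1 : 1 ≤ t generalizing S t
  · rw [← card_reflection, ← hexTriples_sdiff_reflection]
    refine this (t := 1 - t) (reflection_subset hS)
      (fun j ↦ (card_mixedRows_reflection r S j).trans_le (hb j)) (fun i ↦ ?_) ?_ (by omega)
      (by omega) (by omega)
    · simpa only [hexTriples_sdiff_reflection, fullRows_reflection, image_nonempty] using hSc i
    · rw [fullRows_reflection]
      exact mem_image_of_mem _ ht
  have hcard := (card_le_card (sdiff_subset_biUnion_hexRhombus r S)).trans card_biUnion_le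
  calc (#(hexTriples r \ S) : ℤ)
      ≤ ∑ i, 2 * ((#(Icc 1 (r : ℤ) \ fullRows r S i) : ℤ) * r) := by
        simp only [card_hexRhombus, Int.card_Icc, zero_add, sub_sub_cancel,
          Int.toNat_natCast] at hcard
        exact_mod_cast hcard
    _ ≤ ∑ _i : Fin 3, 2 * (2 * ((b : ℤ) - r) * r) := by
        gcongr with i
        exact card_Icc_sdiff_fullRows_le hS hb hbr hSc ht ht1 hthi i
    _ = 12 * r * (b - r) := by
        rw [sum_const, card_univ, Fintype.card_fin]
        ring

lemma exists_central_mem_fullRows (hS : S ⊆ hexTriples r) (hb : #(mixedRows r S i) ≤ b)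
    (hbr : 4 * b < 5 * r) :
    ∃ t : ℤ, 1 - (2 * r - b) ≤ t ∧ t ≤ 2 * r - b ∧
      (t ∈ fullRows r S i ∨ t ∈ fullRows r (hexTriples r \ S) i) := by
  by_contra! hcon
  have hsub : fullRows r S i ∪ fullRows r (hexTriples r \ S) i ⊆
      Icc (1 - (r : ℤ)) (-(2 * r - b)) ∪ Icc (2 * (r : ℤ) - b + 1) r := by
    intro t ht
    have htr : t ∈ Icc (1 - (r : ℤ)) r :=
      union_subset sdiff_subset sdiff_subset ht
    have hfar : t < 1 - (2 * r - b) ∨ 2 * r - b < t := by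
      by_contra! h
      exact (mem_union.1 ht).elim (hcon t h.1 h.2).1 (hcon t h.1 h.2).2
    rw [mem_union, mem_Icc, mem_Icc]
    rw [mem_Icc] at htr
    omega
  have hcard := (card_le_card hsub).trans (card_union_le _ _)
  have hmixed := two_mul_le_card_mixedRows_add hS i
  rw [Int.card_Icc, Int.card_Icc] at hcard
  omega

/-- Stated symmetrically in `S` and its complement, of which the larger satisfies neither
bound. -/
lemma card_le_or_card_sdiff_le (hS : S ⊆ hexTriples r) (hb : ∀ j, #(mixedRows r S j) ≤ b)
    (hbr : 4 * b < 5 * r) :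
    (2 * #S ≤ 3 * b ^ 2 + 1 ∨ (#S : ℤ) ≤ 12 * r * (b - r)) ∨
      (2 * #(hexTriples r \ S) ≤ 3 * b ^ 2 + 1 ∨
        (#(hexTriples r \ S) : ℤ) ≤ 12 * r * (b - r)) := by
  have hb' : ∀ j, #(mixedRows r (hexTriples r \ S) j) ≤ b := fun j ↦ by
    rw [mixedRows_sdiff hS]
    exact hb j
  by_cases hfull : ∃ i, ∀ j ≠ i, fullRows r S j = ∅
  · obtain ⟨i, hi⟩ := hfull
    exact Or.inl (Or.inl (two_mul_card_le_of_fullRows_eq_empty hS hb hbr hi))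
  by_cases hfull' : ∃ i, ∀ j ≠ i, fullRows r (hexTriples r \ S) j = ∅
  · obtain ⟨i, hi⟩ := hfull'
    exact Or.inr (Or.inl (two_mul_card_le_of_fullRows_eq_empty sdiff_subset hb' hbr hi))
  push Not at hfull hfull'
  obtain ⟨t, htlo, hthi, ht | ht⟩ := exists_central_mem_fullRows hS (hb 0) hbr
  · exact Or.inr (Or.inr (card_sdiff_le_of_mem_fullRows hS hb hbr hfull' ht htlo hthi))
  · rw [← Finset.sdiff_sdiff_eq_self hS] at hfull
    have := card_sdiff_le_of_mem_fullRows sdiff_subset hb' hbr hfull ht htlo hthi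
    rw [Finset.sdiff_sdiff_eq_self hS] at this
    exact Or.inl (Or.inr this)

theorem twentyFive_mul_card_le_of_card_mixedRows_le (hS : S ⊆ hexTriples r)
    (hcard : #S ≤ 3 * r ^ 2) (hb : ∀ j, #(mixedRows r S j) ≤ b) :
    25 * #S ≤ 48 * b ^ 2 + 25 * b := by
  rcases le_or_gt (5 * r) (4 * b) with hbr | hbr
  · nlinarith
  have hcompl : 3 * r ^ 2 ≤ #(hexTriples r \ S) := by
    have := card_sdiff_add_card_eq_card hS
    rw [card_hexTriples] at this
    omega
  rcases card_le_or_card_sdiff_le hS hb hbr with (h | h) | (h | h)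
  · rcases b.eq_zero_or_pos with rfl | hb0
    · omega
    · nlinarith
  · zify at hbr ⊢
    nlinarith
  · exfalso
    have hr : 1 * 1 ≤ r * r := Nat.mul_le_mul (by omega) (by omega)
    have hsq : 4 * b * (4 * b) < 5 * r * (5 * r) := Nat.mul_lt_mul'' hbr hbr
    nlinarith
  · exfalso
    zify at hcompl hbr
    nlinarith

end Isoperimetry

/-! ### Crossings along a row -/

section Crossing

variable {r : ℕ} {S : Finset (Fin 3 → ℤ)} {i : Fin 3} {c d : Fin 3 → ℤ}

/-- Adjacency of the hexagonal grid in symmetric coordinates (see `hexCoords`): moving along an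
edge changes one coordinate by one. -/
def TripleAdj (c d : Fin 3 → ℤ) : Prop :=
  ∃ l, d = c + Pi.single l 1 ∨ c = d + Pi.single l 1

lemma exists_lt_of_sum_le (hcd : c ≠ d) (h : ∑ l, c l ≤ ∑ l, d l) : ∃ l, c l < d l := by
  by_contra! hdc
  exact h.not_gt (Fintype.sum_strictMono (lt_of_le_of_ne hdc hcd.symm))

lemma mem_hexTriples_of_mem_uIcc {e : Fin 3 → ℤ} (hc : c ∈ hexTriples r) (hd : d ∈ hexTriples r)
    (he : ∀ l, e l ∈ uIcc (c l) (d l)) (hsum : ∑ l, e l = 1 ∨ ∑ l, e l = 2) :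
    e ∈ hexTriples r := by
  rw [mem_hexTriples] at hc hd ⊢
  refine ⟨fun l ↦ ?_, hsum⟩
  have hcl := hc.1 l
  have hdl := hd.1 l
  have hel := he l
  rw [mem_uIcc] at hel
  omega

lemma exists_tripleAdj_mem_uIcc (hc : c ∈ hexTriples r) (hd : d ∈ hexTriples r) (hcd : c ≠ d) :
    ∃ e ∈ hexTriples r, TripleAdj c e ∧ (∀ l, e l ∈ uIcc (c l) (d l)) ∧ e ≠ c := by
  have hds := (mem_hexTriples.1 hd).2
  rcases (mem_hexTriples.1 hc).2 with hcs | hcs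
  · obtain ⟨l, hl⟩ := exists_lt_of_sum_le hcd (by omega)
    have hmem : ∀ m, (c + Pi.single l 1 : Fin 3 → ℤ) m ∈ uIcc (c m) (d m) := fun m ↦ by
      rw [Pi.add_apply, Pi.single_apply, mem_uIcc]
      split_ifs with hml
      · rw [hml]
        omega
      · omega
    refine ⟨c + Pi.single l 1, mem_hexTriples_of_mem_uIcc hc hd hmem (Or.inr ?_),
      ⟨l, Or.inl rfl⟩, hmem, by simp⟩
    simp [sum_add_distrib, hcs]
  · obtain ⟨l, hl⟩ := exists_lt_of_sum_le hcd.symm (by omega)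
    have hmem : ∀ m, (c - Pi.single l 1 : Fin 3 → ℤ) m ∈ uIcc (c m) (d m) := fun m ↦ by
      rw [Pi.sub_apply, Pi.single_apply, mem_uIcc]
      split_ifs with hml
      · rw [hml]
        omega
      · omega
    refine ⟨c - Pi.single l 1, mem_hexTriples_of_mem_uIcc hc hd hmem (Or.inl ?_),
      ⟨l, Or.inr (sub_add_cancel _ _).symm⟩, hmem, by simp⟩
    simp [sum_sub_distrib, hcs]

/-- The vertices of a row form a path. -/
lemma exists_tripleAdj_of_mem_mixedRows {t : ℤ} (ht : t ∈ mixedRows r S i)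
    (hS : S ⊆ hexTriples r) :
    ∃ c ∈ S, c i = t ∧ ∃ d ∈ hexTriples r \ S, TripleAdj c d := by
  rw [mixedRows, mem_inter, mem_metRows, mem_metRows] at ht
  obtain ⟨⟨c, hc, hct⟩, d, hd, hdt⟩ := ht
  induction hn : ∑ l, (d l - c l).natAbs using Nat.strong_induction_on generalizing c with
  | _ n ih =>
    have hcd : c ≠ d := fun h ↦ (mem_sdiff.1 hd).2 (h ▸ hc)
    obtain ⟨e, he, hce, hmem, hne⟩ :=
      exists_tripleAdj_mem_uIcc (hS hc) (mem_sdiff.1 hd).1 hcd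
    by_cases heS : e ∈ S
    · have het : e i = t := by simpa [hct, hdt] using hmem i
      have hle : ∀ l, (d l - e l).natAbs ≤ (d l - c l).natAbs := fun l ↦ by
        have := hmem l
        rw [mem_uIcc] at this
        omega
      obtain ⟨m, hm⟩ := Function.ne_iff.1 hne
      have hlt : (d m - e m).natAbs < (d m - c m).natAbs := by
        have := hmem m
        rw [mem_uIcc] at this
        omega
      exact ih _ (hn ▸ sum_lt_sum (fun l _ ↦ hle l) ⟨m, mem_univ m, hlt⟩) e heS het rfl
    · exact ⟨c, hc, hct, e, mem_sdiff.2 ⟨he, heS⟩, hce⟩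

end Crossing

/-! ### Symmetric coordinates on the hexagonal grid -/

section HexCoords

variable {r : ℕ} {v w : ℤ × ℤ}

/-- Symmetric coordinates: the rows of each direction are the level sets of the corresponding
coordinate, and the coordinates of `(x, y)` sum to `1` if `x + y` is even and to `2` otherwise. -/
def hexCoords (v : ℤ × ℤ) : Fin 3 → ℤ :=
  ![rowInd 0 v, -rowInd 1 v, 1 - rowInd 2 v]

lemma hexCoords_zero (v : ℤ × ℤ) : hexCoords v 0 = v.2 := rfl

lemma hexCoords_one (v : ℤ × ℤ) : hexCoords v 1 = -((v.2 - v.1) / 2) := by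
  simp [hexCoords, rowInd, Int.fdiv_eq_ediv_of_nonneg]

lemma hexCoords_two (v : ℤ × ℤ) : hexCoords v 2 = 1 - (v.1 + v.2) / 2 := by
  simp [hexCoords, rowInd, Int.fdiv_eq_ediv_of_nonneg]

lemma sum_hexCoords (v : ℤ × ℤ) : ∑ l, hexCoords v l = 1 ∨ ∑ l, hexCoords v l = 2 := by
  rw [Fin.sum_univ_three, hexCoords_zero, hexCoords_one, hexCoords_two]
  omega

lemma hexCoords_injective : Function.Injective hexCoords := by
  intro v w h
  have h₀ := congrFun h 0
  have h₁ := congrFun h 1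
  have h₂ := congrFun h 2
  rw [hexCoords_zero, hexCoords_zero] at h₀
  rw [hexCoords_one, hexCoords_one] at h₁
  rw [hexCoords_two, hexCoords_two] at h₂
  exact Prod.ext (by omega) h₀

lemma exists_hexCoords_eq {c : Fin 3 → ℤ} (hc : ∑ l, c l = 1 ∨ ∑ l, c l = 2) :
    ∃ v, hexCoords v = c := by
  rw [Fin.sum_univ_three] at hc
  refine ⟨(1 - c 2 + c 1, c 0), funext fun l ↦ ?_⟩
  fin_cases l
  · exact hexCoords_zero _
  · refine (hexCoords_one _).trans ?_
    dsimp
    omega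
  · refine (hexCoords_two _).trans ?_
    dsimp
    omega

lemma hexAdj_comm : hexAdj v w ↔ hexAdj w v := by
  simp only [hexAdj, eq_comm (a := v.1), eq_comm (a := v.2), ← Int.natAbs_neg (v.1 - w.1),
    ← Int.natAbs_neg (v.2 - w.2), neg_sub, min_comm v.2]
  refine or_congr_right (and_congr_right fun h ↦ ?_)
  rw [h]

lemma hexAdj_of_hexCoords_eq_add_single {l : Fin 3}
    (h : hexCoords w = hexCoords v + Pi.single l 1) : hexAdj v w := by
  have hv := sum_hexCoords v
  have hw := sum_hexCoords w
  have hsum : ∑ m, hexCoords w m = ∑ m, hexCoords v m + 1 := by simp [h, sum_add_distrib]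
  have h₀ := congrFun h 0
  have h₁ := congrFun h 1
  have h₂ := congrFun h 2
  rw [Fin.sum_univ_three, Fin.sum_univ_three] at hsum
  rw [Fin.sum_univ_three] at hv hw
  simp only [hexCoords_zero, hexCoords_one, hexCoords_two, Pi.add_apply,
    Pi.single_apply] at hv hw hsum h₀ h₁ h₂
  rw [hexAdj, Int.even_iff]
  split_ifs at h₀ h₁ h₂ <;> omega

lemma TripleAdj.hexAdj (h : TripleAdj (hexCoords v) (hexCoords w)) : hexAdj v w := by
  obtain ⟨l, h | h⟩ := h
  · exact hexAdj_of_hexCoords_eq_add_single h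
  · exact hexAdj_comm.1 (hexAdj_of_hexCoords_eq_add_single h)

/-- The cell `C(a,b)` consists of the triples other than `p` and `p + 1` in the cube
`p + {0, 1}³`, where `p = (b, a, -(a + b))` has sum `0`. -/
lemma mem_hexCell_iff {a b : ℤ} :
    v ∈ hexCell a b ↔
      (b ≤ hexCoords v 0 ∧ hexCoords v 0 ≤ b + 1) ∧
      (a ≤ hexCoords v 1 ∧ hexCoords v 1 ≤ a + 1) ∧
      (-(a + b) ≤ hexCoords v 2 ∧ hexCoords v 2 ≤ -(a + b) + 1) := by
  obtain ⟨x, y⟩ := v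
  simp only [hexCell, Set.mem_insert_iff, Set.mem_singleton_iff, Prod.mk.injEq, hexCoords_zero,
    hexCoords_one, hexCoords_two]
  omega

/-- If the coordinates sum to `1`, lowering a maximal one gives the centre of a cell of `G_r`; if
they sum to `2`, lowering all but a minimal one does. -/
lemma mem_gridVerts_iff (hr : 1 ≤ r) : v ∈ gridVerts r ↔ hexCoords v ∈ hexTriples r := by
  have hsum := sum_hexCoords v
  simp only [gridVerts, Set.mem_ofPred_eq, mem_hexCell_iff, mem_hexTriples, Fin.forall_fin_succ,
    Fin.succ_zero_eq_one, Fin.succ_one_eq_two, IsEmpty.forall_iff, and_true, hsum]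
  rw [Fin.sum_univ_three] at hsum
  generalize hexCoords v 0 = x at *
  generalize hexCoords v 1 = y at *
  generalize hexCoords v 2 = z at *
  constructor
  · rintro ⟨a, b, hab, h⟩
    omega
  · intro h
    rcases hsum with hsum | hsum
    · obtain hx | hy | hz : (y ≤ x ∧ z ≤ x) ∨ (x ≤ y ∧ z ≤ y) ∨ (x ≤ z ∧ y ≤ z) := by omega
      exacts [⟨y, x - 1, by omega⟩, ⟨y - 1, x, by omega⟩, ⟨y, x, by omega⟩]
    · obtain hx | hy | hz : (x ≤ y ∧ x ≤ z) ∨ (y ≤ x ∧ y ≤ z) ∨ (z ≤ x ∧ z ≤ y) := by omega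
      exacts [⟨y - 1, x, by omega⟩, ⟨y, x - 1, by omega⟩, ⟨y - 1, x - 1, by omega⟩]

lemma exists_hexCoords_preimage_eq {W : Set (ℤ × ℤ)} (hr : 1 ≤ r) (hW : W ⊆ gridVerts r) :
    ∃ S ⊆ hexTriples r, #S = W.ncard ∧ hexCoords ⁻¹' S = W := by
  have himage : hexCoords '' W ⊆ hexTriples r :=
    Set.image_subset_iff.2 fun v hv ↦ (mem_gridVerts_iff hr).1 (hW hv)
  lift hexCoords '' W to Finset (Fin 3 → ℤ) using (hexTriples r).finite_toSet.subset himage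
    with S hS
  refine ⟨S, mod_cast himage, ?_, ?_⟩
  · rw [← Set.ncard_coe_finset, hS, Set.ncard_image_of_injective _ hexCoords_injective]
  · rw [hS, Set.preimage_image_eq _ hexCoords_injective]

lemma card_mixedRows_le_ncard_hexBdryIn {S : Finset (Fin 3 → ℤ)} (hr : 1 ≤ r)
    (hS : S ⊆ hexTriples r) (i : Fin 3) :
    #(mixedRows r S i) ≤ (hexBdryIn r (hexCoords ⁻¹' S)).ncard := by
  have hfin : (hexBdryIn r (hexCoords ⁻¹' S)).Finite :=
    (S.finite_toSet.preimage hexCoords_injective.injOn).subset fun v hv ↦ hv.1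
  rw [← Set.ncard_coe_finset]
  refine (Set.ncard_le_ncard ?_ (hfin.image (hexCoords · i))).trans (Set.ncard_image_le hfin)
  intro t ht
  obtain ⟨c, hc, hct, d, hd, hcd⟩ := exists_tripleAdj_of_mem_mixedRows ht hS
  rw [mem_sdiff] at hd
  obtain ⟨v, rfl⟩ := exists_hexCoords_eq (mem_hexTriples.1 (hS hc)).2
  obtain ⟨w, rfl⟩ := exists_hexCoords_eq (mem_hexTriples.1 hd.1).2
  exact ⟨v, ⟨hc, w, (mem_gridVerts_iff hr).2 hd.1, hd.2, hcd.hexAdj⟩, hct⟩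

theorem twentyFive_mul_ncard_le_of_subset_gridVerts {W : Set (ℤ × ℤ)} (hr : 1 ≤ r)
    (hW : W ⊆ gridVerts r) (hcard : W.ncard ≤ 3 * r ^ 2) :
    25 * W.ncard ≤ 48 * (hexBdryIn r W).ncard ^ 2 + 25 * (hexBdryIn r W).ncard := by
  obtain ⟨S, hS, hSW, rfl⟩ := exists_hexCoords_preimage_eq hr hW
  rw [← hSW] at hcard ⊢
  exact twentyFive_mul_card_le_of_card_mixedRows_le hS hcard
    (card_mixedRows_le_ncard_hexBdryIn hr hS)

end HexCoords

lemma mul_sqrt_add_sub_le {b c n : ℝ} (hb : 0 ≤ b) (hn : 0 ≤ n) (h : c ^ 2 * (n - b) ≤ b ^ 2) :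
    c * √(n + c ^ 2 / 4) - c ^ 2 / 2 ≤ b := by
  rw [sub_le_iff_le_add]
  refine le_of_sq_le_sq ?_ (by positivity)
  rw [mul_pow, Real.sq_sqrt (by positivity)]
  nlinarith

theorem finite_hex_boundary_isoperimetric_large_radius_general {c : ℝ} {r : ℕ}
    {W : Set (ℤ × ℤ)} (hc : c ^ 2 ≤ 25 / 48) (hr : 1 ≤ r) (hW : W ⊆ gridVerts r)
    (hcard : W.ncard ≤ 3 * r ^ 2) :
    c * √(W.ncard + c ^ 2 / 4) - c ^ 2 / 2 ≤ (hexBdryIn r W).ncard := by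
  have hiso : 25 * (W.ncard : ℝ) ≤
      48 * (hexBdryIn r W).ncard ^ 2 + 25 * (hexBdryIn r W).ncard :=
    mod_cast twentyFive_mul_ncard_le_of_subset_gridVerts hr hW hcard
  refine mul_sqrt_add_sub_le (Nat.cast_nonneg _) (Nat.cast_nonneg _) ?_
  nlinarith

lemma sq_le_of_lt_sqrt_six_sub_sqrt_three {c : ℝ} (hc0 : 0 ≤ c) (hc : c < √6 - √3) :
    c ^ 2 ≤ 25 / 48 := by
  have h₆ : √6 ≤ 2.45 := Real.sqrt_le_iff.2 (by norm_num)
  have h₃ : 1.73 ≤ √3 := Real.le_sqrt_of_sq_le (by norm_num)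
  nlinarith

/-- For every `0 ≤ c < √6 - √3` there is a radius `R_c` beyond which
`|ℬ_{G_r}(W)| ≥ c·√(|W| + c²/4) - c²/2` holds for all `W ⊆ V(G_r)` with `|W| ≤ 3r²`. -/
theorem finite_hex_boundary_isoperimetric_large_radius (c : ℝ) (hc0 : 0 ≤ c)
    (hc : c < Real.sqrt 6 - Real.sqrt 3) :
    ∃ R : ℕ, ∀ r : ℕ, R ≤ r → ∀ W : Set (ℤ × ℤ), W ⊆ gridVerts r → W.Finite →
      W.ncard ≤ 3*r^2 →
        c * Real.sqrt ((W.ncard : ℝ) + c^2 / 4) - c^2 / 2 ≤ ((hexBdryIn r W).ncard : ℝ) := by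
  exact ⟨1, fun _ hr _ hW _ ↦ finite_hex_boundary_isoperimetric_large_radius_general
    (sq_le_of_lt_sqrt_six_sub_sqrt_three hc0 hc) hr hW⟩
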